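/- Let g : S → ℂ be a solution of d'Alembert's functional equation g(xy) + g(xτ(y)) = 2 g(x) g(y) for all x, y ∈ S, with Σ_{i∈I} c_i g(z_i) ≠ 0 and Σ_{i∈I} c_i g(x z_i) = g(x) · Σ_{i∈I} c_i g(z_i) for all x ∈ S. Then the function f(x) := (Σ_{i∈I} c_i g(z_i)) · g(x) is a non-zero solution of the integral Kannappan equation. -/

import Mathlib

/-!
Let `L` be integration against the given measure. Scaling passes through `L`, so if
`L (fun t ↦ g (x * t)) = g x * L g`, then the translate of `L g • g` by `x` has integral
`(L g)² * g x`. The integral Kannappan equation for `L g • g` is therefore d'Alembert's equation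
for `g` multiplied by `(L g)²`. Also `L (L g • g) = (L g)²`, which is nonzero.
-/

section DAlembertKannappan

variable {S R : Type*} [CommSemiring R]

/-- Solutions of d'Alembert's functional equation on `S` with respect to a self-map `τ`, the
substitute for inversion. -/
def IsDAlembert [Mul S] (τ : S → S) (g : S → R) : Prop :=
  ∀ x y, g (x * y) + g (x * τ y) = 2 * g x * g y

/-- Homogeneous maps `(S → R) → R`, standing for `h ↦ ∫ h dμ`. Additivity is not demanded, so that
the Bochner integral, defined to be `0` on non-integrable functions, is an instance. -/
abbrev HomogeneousFunctional (S R : Type*) [CommSemiring R] := MulActionHom (@id R) (S → R) R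

/-- Solutions of the integral Kannappan equation, with `L` in place of integration against `μ`. -/
def IsIntegralKannappan [Mul S] (τ : S → S) (L : HomogeneousFunctional S R) (f : S → R) : Prop :=
  ∀ x y, L (fun t ↦ f (x * y * t)) + L (fun t ↦ f (x * τ y * t)) = 2 * f x * f y

/-- Integration against the discrete measure `∑ i ∈ I, c i • δ_{z i}`. -/
def discreteIntegral {ι : Type*} (I : Finset ι) (c : ι → R) (z : ι → S) :
    HomogeneousFunctional S R where
  toFun h := ∑ i ∈ I, c i * h (z i)
  map_smul' a h := by
    simp only [Pi.smul_apply, smul_eq_mul, Finset.mul_sum, mul_left_comm, id_eq]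

theorem HomogeneousFunctional.smul_self_ne_zero [IsReduced R] (L : HomogeneousFunctional S R)
    {g : S → R} (hLg : L g ≠ 0) : L g • g ≠ 0 := by
  intro hzero
  have map_zero : L 0 = 0 := by simpa only [zero_smul] using map_smul L (0 : R) 0
  have sq_eq_zero : L g ^ 2 = 0 := by
    rw [sq, ← smul_eq_mul, ← map_smul, hzero, map_zero]
  exact hLg (pow_eq_zero_iff two_ne_zero |>.mp sq_eq_zero)

theorem HomogeneousFunctional.apply_translate_smul_self [Mul S] (L : HomogeneousFunctional S R)
    {g : S → R} {x : S} (hmean : L (fun t ↦ g (x * t)) = g x * L g) :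
    L (fun t ↦ (L g • g) (x * t)) = L g ^ 2 * g x :=
  calc
    L (fun t ↦ (L g • g) (x * t)) = L g * L (fun t ↦ g (x * t)) :=
      map_smul L (L g) fun t ↦ g (x * t)
    _ = L g ^ 2 * g x := by rw [hmean]; ring

theorem IsDAlembert.isIntegralKannappan_smul [Mul S] {τ : S → S}
    {L : HomogeneousFunctional S R} {g : S → R} (hg : IsDAlembert τ g)
    (hmean : ∀ x, L (fun t ↦ g (x * t)) = g x * L g) :
    IsIntegralKannappan τ L (L g • g) := by
  intro x y
  calc
    L (fun t ↦ (L g • g) (x * y * t)) + L (fun t ↦ (L g • g) (x * τ y * t))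
        = L g ^ 2 * (g (x * y) + g (x * τ y)) := by
      rw [L.apply_translate_smul_self (hmean _), L.apply_translate_smul_self (hmean _), mul_add]
    _ = L g ^ 2 * (2 * g x * g y) := by rw [hg x y]
    _ = 2 * (L g • g) x * (L g • g) y := by
      simp only [Pi.smul_apply, smul_eq_mul]
      ring

theorem stmt_18_general [Mul S] [IsReduced R] {τ : S → S} {L : HomogeneousFunctional S R}
    {g : S → R} (hg : IsDAlembert τ g) (hLg : L g ≠ 0)
    (hmean : ∀ x, L (fun t ↦ g (x * t)) = g x * L g) :
    L g • g ≠ 0 ∧ IsIntegralKannappan τ L (L g • g) :=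
  ⟨L.smul_self_ne_zero hLg, hg.isIntegralKannappan_smul hmean⟩

end DAlembertKannappan

theorem stmt_18 {S ι : Type*} [Semigroup S] (τ : S → S)
    (hτmul : ∀ x y : S, τ (x * y) = τ y * τ x)
    (hτinv : ∀ x : S, τ (τ x) = x)
    (I : Finset ι) (c : ι → ℂ) (z : ι → S)
    (hz : ∀ i ∈ I, ∀ s : S, z i * s = s * z i)
    (g : S → ℂ)
    (hg : ∀ x y : S, g (x * y) + g (x * τ y) = 2 * g x * g y)
    (hg1 : (∑ i ∈ I, c i * g (z i)) ≠ 0)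
    (hg2 : ∀ x : S, (∑ i ∈ I, c i * g (x * z i)) = g x * ∑ i ∈ I, c i * g (z i))
    (f : S → ℂ)
    (hf : ∀ x : S, f x = (∑ i ∈ I, c i * g (z i)) * g x) :
    f ≠ 0 ∧ ∀ x y : S,
      (∑ i ∈ I, c i * f (x * y * z i)) + (∑ i ∈ I, c i * f (x * τ y * z i))
        = 2 * f x * f y := by
  obtain rfl : f = discreteIntegral I c z g • g := funext hf
  exact stmt_18_general (L := discreteIntegral I c z) hg hg1 hg2
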